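/- Let G be a coloured graph on the vertex set ℕ with finitely many edges, each coloured red or blue, and suppose G is red-bipartite. Let e = uu' be a pair of distinct vertices that is not an edge of G. Then e can be coloured red or blue so that the resulting coloured graph G' (obtained from G by adding e with that colour) is red-bipartite and satisfies f(G') ≤ f(G) + φ + 1, where f is the potential function defined below and φ = (1+√5)/2. -/

import Mathlib

open SimpleGraph

/-- The golden ratio `φ = (1 + √5)/2`. -/
noncomputable def φ : ℝ := (1 + Real.sqrt 5) / 2

/-- The auxiliary function `g(x,y) = φ·max(x,y) - φ + max(max(x,y) - φ³, min(x,y))`;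
for a connected red-bipartite graph `H` with red-bipartition `(V₁,V₂)` and more than
one vertex, `f(H) = g(p_H(V₁), p_H(V₂))`. -/
noncomputable def g (x y : ℝ) : ℝ := φ * max x y - φ + max (max x y - φ ^ 3) (min x y)

/-- `σ` encodes a red-bipartition of the coloured graph `(G, c)` (`true` = red,
`false` = blue): vertices with `σ v = true` form `V₁` and those with `σ v = false`
form `V₂`, every red edge joins the two sides and every blue edge stays within a side. -/
def IsRedBipartition (G : SimpleGraph ℕ) (c : Sym2 ℕ → Bool) (σ : ℕ → Bool) : Prop :=
  ∀ u v, G.Adj u v → (c s(u, v) = true ↔ σ u ≠ σ v)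

/-- `p_G(W) = |W|·φ + |E[W]|`, where `E[W]` is the set of edges of `G` with both
endpoints in `W`. -/
noncomputable def pot (G : SimpleGraph ℕ) (W : Set ℕ) : ℝ :=
  (W.ncard : ℝ) * φ + ({e ∈ G.edgeSet | ∀ v ∈ e, v ∈ W}.ncard : ℝ)

/-- The value `f` on the connected component `K` of `G`, with red-bipartition
encoded by `σ`: `0` for an isolated vertex, and
`φ·a - φ + max(a - φ³, b) = g(p(V₁), p(V₂))` otherwise, where `(V₁, V₂)` is the
induced red-bipartition of the component. -/
noncomputable def fComp (G : SimpleGraph ℕ) (σ : ℕ → Bool) (K : G.ConnectedComponent) : ℝ :=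
  letI := Classical.dec K.supp.Subsingleton
  if K.supp.Subsingleton then 0
  else g (pot G {v ∈ K.supp | σ v = true}) (pot G {v ∈ K.supp | σ v = false})

/-- The potential `f(G)`: the sum of `f` over all connected components of `G`
(only finitely many components contribute a non-zero value). -/
noncomputable def potential (G : SimpleGraph ℕ) (σ : ℕ → Bool) : ℝ :=
  ∑ᶠ K : G.ConnectedComponent, fComp G σ K

/-!
If `u` and `u'` lie in one component, the bipartition of that component forces the colour of the
new edge and at most one of its two values `p` grows, by `1`, which costs at most `φ + 1`.

If they lie in different components, the sides of one component may be swapped without changing the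
potential, so both colours are available, and `f(G')` differs from `f(G)` only in the merged
component. Since `φ > 1`, `g` is a maximum of four affine functions, which makes the comparison
linear. Let `(xᵢ, yᵢ)` be the values of `p` on the two sides of the `i`-th component, `xᵢ` for the
side containing the endpoint of the new edge. A red edge gives `(x₁ + y₂, y₁ + x₂)`, which is cheap
enough unless it unites sides that each exceed their partner by more than `1`; in that case a blue
edge, giving `(x₁ + x₂ + 1, y₁ + y₂)`, balances the component and is cheap enough. An isolated
endpoint has `(x, y) = (φ, 0)` but contributes `0` rather than `g φ 0`, so it is treated apart.
-/

/-! ### The golden ratio and the function `g` -/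

section Golden

lemma φ_sq : φ ^ 2 = φ + 1 := Real.goldenRatio_sq

lemma one_lt_φ : 1 < φ := Real.one_lt_goldenRatio

lemma φ_cube : φ ^ 3 = 2 * φ + 1 := by
  linear_combination (φ + 1) * φ_sq

lemma g_comm (x y : ℝ) : g x y = g y x := by
  simp only [g, max_comm x y, min_comm x y]

lemma g_le_iff {x y r : ℝ} :
    g x y ≤ r ↔ φ * x - φ + (x - φ ^ 3) ≤ r ∧ φ * x - φ + y ≤ r ∧
      φ * y - φ + (y - φ ^ 3) ≤ r ∧ φ * y - φ + x ≤ r := by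
  wlog h : y ≤ x generalizing x y
  · rw [g_comm, this (le_of_not_ge h)]
    tauto
  have hmul : 0 ≤ (φ - 1) * (x - y) :=
    mul_nonneg (sub_nonneg.2 one_lt_φ.le) (sub_nonneg.2 h)
  rw [g, max_eq_left h, min_eq_right h, ← le_sub_iff_add_le', max_le_iff]
  constructor
  · rintro ⟨h₁, h₂⟩
    refine ⟨?_, ?_, ?_, ?_⟩ <;> linarith
  · rintro ⟨h₁, h₂, -, -⟩
    constructor <;> linarith

lemma g_φ_φ_le : g φ φ ≤ φ + 1 := by
  rw [g_le_iff, φ_cube]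
  refine ⟨?_, ?_, ?_, ?_⟩ <;> linarith [φ_sq, one_lt_φ]

lemma g_add_one_left_le (x y : ℝ) : g (x + 1) y ≤ g x y + φ + 1 := by
  obtain ⟨h₁, h₂, h₃, h₄⟩ := g_le_iff.1 (le_refl (g x y))
  rw [g_le_iff]
  refine ⟨?_, ?_, ?_, ?_⟩ <;> linarith [one_lt_φ]

lemma g_add_φ_le_or (x y : ℝ) :
    g x (y + φ) ≤ g x y + φ + 1 ∨ g (x + φ + 1) y ≤ g x y + φ + 1 := by
  obtain ⟨h₁, h₂, h₃, h₄⟩ := g_le_iff.1 (le_refl (g x y))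
  rw [φ_cube] at h₁ h₃
  simp only [g_le_iff, φ_cube]
  have hφ := one_lt_φ
  have hsq := φ_sq
  rcases le_total y (x + φ + 1) with h | h
  · left
    refine ⟨?_, ?_, ?_, ?_⟩ <;> linarith
  · right
    have hmul : 0 ≤ (φ - 1) * (y - (x + φ + 1)) :=
      mul_nonneg (sub_nonneg.2 hφ.le) (sub_nonneg.2 h)
    refine ⟨?_, ?_, ?_, ?_⟩ <;> linarith

lemma g_add_swap_le {x₁ y₁ x₂ y₂ : ℝ} (h : x₁ ≤ y₁ + 1 ∨ y₂ ≤ x₂ + 1)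
    (h' : x₂ ≤ y₂ + 1 ∨ y₁ ≤ x₁ + 1) :
    g (x₁ + y₂) (y₁ + x₂) ≤ g x₁ y₁ + g x₂ y₂ + φ + 1 := by
  obtain ⟨h₁, h₂, h₃, h₄⟩ := g_le_iff.1 (le_refl (g x₁ y₁))
  obtain ⟨k₁, k₂, k₃, k₄⟩ := g_le_iff.1 (le_refl (g x₂ y₂))
  rw [φ_cube] at h₁ h₃ k₁ k₃
  rw [g_le_iff, φ_cube]
  refine ⟨?_, by linarith, ?_, by linarith⟩
  · rcases h with h | h <;> linarith
  · rcases h' with h' | h' <;> linarith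

lemma g_add_add_one_le {x₁ y₁ x₂ y₂ : ℝ} (h₁ : y₁ + 1 ≤ x₁) (h₂ : x₂ + 1 ≤ y₂) :
    g (x₁ + x₂ + 1) (y₁ + y₂) ≤ g x₁ y₁ + g x₂ y₂ + φ + 1 := by
  obtain ⟨k₁, k₂, k₃, k₄⟩ := g_le_iff.1 (le_refl (g x₁ y₁))
  obtain ⟨l₁, l₂, l₃, l₄⟩ := g_le_iff.1 (le_refl (g x₂ y₂))
  have hφ := one_lt_φ
  have hmul₁ : 0 ≤ (φ - 1) * (x₁ - (y₁ + 1)) :=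
    mul_nonneg (sub_nonneg.2 hφ.le) (sub_nonneg.2 h₁)
  have hmul₂ : 0 ≤ (φ - 1) * (y₂ - (x₂ + 1)) :=
    mul_nonneg (sub_nonneg.2 hφ.le) (sub_nonneg.2 h₂)
  rw [φ_cube] at k₁ k₃ l₁ l₃
  rw [g_le_iff, φ_cube]
  refine ⟨?_, ?_, ?_, ?_⟩ <;> linarith

lemma g_merge_le_or (x₁ y₁ x₂ y₂ : ℝ) :
    g (x₁ + y₂) (y₁ + x₂) ≤ g x₁ y₁ + g x₂ y₂ + φ + 1 ∨
      g (x₁ + x₂ + 1) (y₁ + y₂) ≤ g x₁ y₁ + g x₂ y₂ + φ + 1 := by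
  by_cases h : x₁ ≤ y₁ + 1 ∨ y₂ ≤ x₂ + 1
  · by_cases h' : x₂ ≤ y₂ + 1 ∨ y₁ ≤ x₁ + 1
    · exact .inl (g_add_swap_le h h')
    · push Not at h'
      right
      rw [add_comm x₁, add_comm y₁, add_comm (g x₁ y₁)]
      exact g_add_add_one_le h'.1.le h'.2.le
  · push Not at h
    exact .inr (g_add_add_one_le h.1.le h.2.le)

end Golden

/-! ### Adding an edge to a graph -/

section Reachability

variable {V : Type*} {G : SimpleGraph V} {u u' v w : V}

lemma reachable_sup_edge_iff :
    (G ⊔ edge u u').Reachable v w ↔ G.Reachable v w ∨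
      G.Reachable v u ∧ G.Reachable u' w ∨ G.Reachable v u' ∧ G.Reachable u w := by
  constructor
  · rintro ⟨p⟩
    induction p with
    | nil => exact .inl .rfl
    | @cons a b c hadj _ ih =>
      rw [sup_adj, edge_adj] at hadj
      rcases hadj with hadj | ⟨⟨rfl, rfl⟩ | ⟨rfl, rfl⟩, -⟩
      · exact ih.imp hadj.reachable.trans
          (.imp (.imp_left hadj.reachable.trans) (.imp_left hadj.reachable.trans))
      · rcases ih with h | ⟨-, h⟩ | ⟨-, h⟩
        exacts [.inr (.inl ⟨.rfl, h⟩), .inr (.inl ⟨.rfl, h⟩), .inl h]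
      · rcases ih with h | ⟨-, h⟩ | ⟨-, h⟩
        exacts [.inr (.inr ⟨.rfl, h⟩), .inl h, .inr (.inr ⟨.rfl, h⟩)]
  · have hle : ∀ {a b}, G.Reachable a b → (G ⊔ edge u u').Reachable a b :=
      (·.mono le_sup_left)
    have hedge : (G ⊔ edge u u').Reachable u u' := by
      by_cases h : u = u'
      · exact h ▸ .rfl
      · exact Adj.reachable (.inr (by simp [edge_adj, h]))
    rintro (h | ⟨h, h'⟩ | ⟨h, h'⟩)
    · exact hle h
    · exact ((hle h).trans hedge).trans (hle h')
    · exact ((hle h).trans hedge.symm).trans (hle h')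

lemma reachable_sup_edge_left_iff :
    (G ⊔ edge u u').Reachable u w ↔ G.Reachable u w ∨ G.Reachable u' w := by
  rw [reachable_sup_edge_iff]
  have := Reachable.refl (G := G) u
  tauto

lemma bijOn_map_connectedComponent_sup_edge :
    Set.BijOn (ConnectedComponent.map (Hom.ofLE (le_sup_left : G ≤ G ⊔ edge u u')))
      {G.connectedComponentMk u, G.connectedComponentMk u'}ᶜ
      {(G ⊔ edge u u').connectedComponentMk u}ᶜ := by
  have mem_iff : ∀ v, G.connectedComponentMk v ∈
      ({G.connectedComponentMk u, G.connectedComponentMk u'} : Set _)ᶜ ↔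
        ¬ (G ⊔ edge u u').Reachable v u := fun v => by
    rw [reachable_comm, reachable_sup_edge_left_iff, reachable_comm, G.reachable_comm (u := u'),
      Set.mem_compl_iff, Set.mem_insert_iff, Set.mem_singleton_iff, ConnectedComponent.eq,
      ConnectedComponent.eq]
  refine ⟨fun K => ?_, fun K => ?_, fun K => ?_⟩
  · induction K using ConnectedComponent.ind with | h v =>
    intro hv hvu
    exact (mem_iff v).1 hv (ConnectedComponent.exact hvu)
  · induction K using ConnectedComponent.ind with | h v =>
    intro hv L
    induction L using ConnectedComponent.ind with | h w =>
    intro _ hvw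
    have hvu := (mem_iff v).1 hv
    rcases reachable_sup_edge_iff.1 (ConnectedComponent.exact hvw) with h | ⟨h, -⟩ | ⟨h, -⟩
    · exact ConnectedComponent.sound h
    · exact absurd (reachable_sup_edge_iff.2 (.inl h)) hvu
    · exact absurd (reachable_sup_edge_iff.2 (.inr (.inr ⟨h, .rfl⟩))) hvu
  · induction K using ConnectedComponent.ind with | h v =>
    intro hv
    exact ⟨_, (mem_iff v).2 fun hvu => hv (ConnectedComponent.sound hvu), rfl⟩

lemma reachable_iff_eq_of_notMem_support (h : v ∉ G.support) : G.Reachable v w ↔ v = w :=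
  ⟨fun hvw => by_contra fun hne => h (mem_support_of_reachable hne hvw), fun hvw => hvw ▸ .rfl⟩

lemma subsingleton_supp_connectedComponentMk_iff :
    (G.connectedComponentMk v).supp.Subsingleton ↔ v ∉ G.support := by
  refine ⟨fun h ⟨w, hvw⟩ => hvw.ne (h rfl (ConnectedComponent.sound hvw.symm.reachable)),
    fun h => ?_⟩
  refine Set.subsingleton_of_subset_singleton (a := v) fun w hw => ?_
  exact ((reachable_iff_eq_of_notMem_support h).1 (ConnectedComponent.exact hw).symm).symm

lemma finite_support_of_finite_edgeSet (hfin : G.edgeSet.Finite) : G.support.Finite := by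
  refine (hfin.biUnion (t := fun e => {v | v ∈ e}) fun e _ => ?_).subset ?_
  · induction e with
    | h a b => exact (Set.toFinite {a, b}).subset fun v hv => by simpa using hv
  · rintro v ⟨w, h⟩
    exact Set.mem_biUnion (x := s(v, w)) h (Sym2.mem_mk_left v w)

lemma finite_setOf_reachable (hfin : G.edgeSet.Finite) (v : V) : {w | G.Reachable v w}.Finite := by
  refine ((finite_support_of_finite_edgeSet hfin).insert v).subset fun w hw => ?_
  by_cases hne : w = v
  · exact .inl hne
  · exact .inr (mem_support_of_reachable hne hw.symm)

lemma edgeSet_sup_edge (hne : u ≠ u') : (G ⊔ edge u u').edgeSet = insert s(u, u') G.edgeSet := by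
  rw [edgeSet_sup, edgeSet_edge_of_ne hne, Set.union_singleton]

end Reachability

/-! ### Near and far sides -/

/-- The side containing `v` of the component of `v` in the bipartition `σ`. Sides are indexed by a
vertex rather than by a colour, which makes them invariant under swapping `σ` on a component. -/
def nearSide (G : SimpleGraph ℕ) (σ : ℕ → Bool) (v : ℕ) : Set ℕ :=
  {w | G.Reachable v w ∧ σ w = σ v}

/-- The side not containing `v` of the component of `v` in the bipartition `σ`. -/
def farSide (G : SimpleGraph ℕ) (σ : ℕ → Bool) (v : ℕ) : Set ℕ :=
  {w | G.Reachable v w ∧ σ w ≠ σ v}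

section Sides

variable {G : SimpleGraph ℕ} {c : Sym2 ℕ → Bool} {σ τ : ℕ → Bool} {u u' v w : ℕ}

lemma nearSide_subset : nearSide G σ v ⊆ {w | G.Reachable v w} := fun _ => And.left

lemma farSide_subset : farSide G σ v ⊆ {w | G.Reachable v w} := fun _ => And.left

lemma IsRedBipartition.eq_iff_eq (hσ : IsRedBipartition G c σ) (hτ : IsRedBipartition G c τ)
    (h : G.Reachable v w) : σ v = σ w ↔ τ v = τ w := by
  obtain ⟨p⟩ := h
  induction p with
  | nil => exact iff_of_true rfl rfl
  | @cons a b d hadj _ ih =>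
    have hab : σ a ≠ σ b ↔ τ a ≠ τ b := (hσ a b hadj).symm.trans (hτ a b hadj)
    revert hab ih
    generalize σ a = σa, σ b = σb, σ d = σd, τ a = τa, τ b = τb, τ d = τd
    decide +revert

lemma IsRedBipartition.nearSide_eq (hσ : IsRedBipartition G c σ) (hτ : IsRedBipartition G c τ)
    (v : ℕ) : nearSide G σ v = nearSide G τ v :=
  Set.ext fun _ => and_congr_right fun h => hσ.eq_iff_eq hτ h.symm

lemma IsRedBipartition.farSide_eq (hσ : IsRedBipartition G c σ) (hτ : IsRedBipartition G c τ)
    (v : ℕ) : farSide G σ v = farSide G τ v :=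
  Set.ext fun _ => and_congr_right fun h => (hσ.eq_iff_eq hτ h.symm).not

lemma IsRedBipartition.sup_edge (hσ : IsRedBipartition G c σ) (hnadj : ¬ G.Adj u u') :
    IsRedBipartition (G ⊔ edge u u') (fun x => if x = s(u, u') then σ u != σ u' else c x) σ := by
  rintro a b (hab | hab)
  · have hne : s(a, b) ≠ s(u, u') := fun h => hnadj (G.adj_congr_of_sym2 h |>.1 hab)
    simpa only [if_neg hne] using hσ a b hab
  · obtain ⟨⟨rfl, rfl⟩ | ⟨rfl, rfl⟩, -⟩ := (edge_adj ..).1 hab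
    · simp
    · simp [Sym2.eq_swap, ne_comm]

open Classical in
lemma IsRedBipartition.exists_bne_eq (hσ : IsRedBipartition G c σ) (h : ¬ G.Reachable u u')
    (b : Bool) : ∃ τ, IsRedBipartition G c τ ∧ (τ u != τ u') = b := by
  by_cases hb : (σ u != σ u') = b
  · exact ⟨σ, hσ, hb⟩
  · refine ⟨fun v => σ v ^^ decide (G.Reachable u v), fun v w hadj => ?_, ?_⟩
    · have hvw : G.Reachable u v ↔ G.Reachable u w :=
        ⟨(·.trans hadj.reachable), (·.trans hadj.symm.reachable)⟩
      simp [hσ v w hadj, hvw]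
    · have hu : G.Reachable u u := .rfl
      revert hb
      simp only [h, hu]
      cases σ u <;> cases σ u' <;> cases b <;> decide

lemma pot_empty : pot G ∅ = 0 := by
  have : {e ∈ G.edgeSet | ∀ v ∈ e, v ∈ (∅ : Set ℕ)} = ∅ :=
    Set.eq_empty_of_forall_notMem fun e he => he.2 _ (Sym2.out_fst_mem e)
  rw [pot, this]
  simp

lemma pot_singleton (v : ℕ) : pot G {v} = φ := by
  have : {e ∈ G.edgeSet | ∀ w ∈ e, w ∈ ({v} : Set ℕ)} = ∅ := by
    refine Set.eq_empty_of_forall_notMem fun e => ?_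
    induction e with | h a b =>
    rintro ⟨hadj, h⟩
    exact G.ne_of_adj hadj ((h a (Sym2.mem_mk_left a b)).trans (h b (Sym2.mem_mk_right a b)).symm)
  rw [pot, this]
  simp

lemma pot_union (hfin : G.edgeSet.Finite) {W₁ W₂ : Set ℕ} (hW₁ : W₁.Finite) (hW₂ : W₂.Finite)
    (hdisj : Disjoint W₁ W₂) (hnadj : ∀ x ∈ W₁, ∀ y ∈ W₂, ¬ G.Adj x y) :
    pot G (W₁ ∪ W₂) = pot G W₁ + pot G W₂ := by
  have hE : {e ∈ G.edgeSet | ∀ v ∈ e, v ∈ W₁ ∪ W₂} =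
      {e ∈ G.edgeSet | ∀ v ∈ e, v ∈ W₁} ∪ {e ∈ G.edgeSet | ∀ v ∈ e, v ∈ W₂} := by
    ext e
    induction e with | h a b =>
    simp only [Set.mem_ofPred_eq, mem_edgeSet, Sym2.mem_iff, forall_eq_or_imp, forall_eq,
      Set.mem_union]
    have := G.adj_comm a b
    grind
  have hEdisj : Disjoint {e ∈ G.edgeSet | ∀ v ∈ e, v ∈ W₁} {e ∈ G.edgeSet | ∀ v ∈ e, v ∈ W₂} :=
    Set.disjoint_left.2 fun e h₁ h₂ => Set.disjoint_left.1 hdisj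
      (h₁.2 _ (Sym2.out_fst_mem e)) (h₂.2 _ (Sym2.out_fst_mem e))
  rw [pot, pot, pot, hE, Set.ncard_union_eq hdisj hW₁ hW₂, Set.ncard_union_eq hEdisj
    (hfin.subset (Set.sep_subset _ _)) (hfin.subset (Set.sep_subset _ _))]
  push_cast
  ring

lemma pot_sup_edge_of_mem (hfin : G.edgeSet.Finite) (hne : u ≠ u') (hnadj : ¬ G.Adj u u')
    {W : Set ℕ} (hu : u ∈ W) (hu' : u' ∈ W) : pot (G ⊔ edge u u') W = pot G W + 1 := by
  have hE : {e ∈ (G ⊔ edge u u').edgeSet | ∀ v ∈ e, v ∈ W} =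
      insert s(u, u') {e ∈ G.edgeSet | ∀ v ∈ e, v ∈ W} := by
    have huu' : ∀ v ∈ s(u, u'), v ∈ W := by simp [hu, hu']
    rw [edgeSet_sup_edge hne]
    ext e
    simp only [Set.mem_ofPred_eq, Set.mem_insert_iff]
    grind
  rw [pot, pot, hE, Set.ncard_insert_of_notMem (fun h => hnadj h.1)
    (hfin.subset (Set.sep_subset _ _))]
  push_cast
  ring

lemma pot_sup_edge_of_notMem {W : Set ℕ} (h : ¬ (u ∈ W ∧ u' ∈ W)) :
    pot (G ⊔ edge u u') W = pot G W := by
  have hE : {e ∈ (G ⊔ edge u u').edgeSet | ∀ v ∈ e, v ∈ W} =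
      {e ∈ G.edgeSet | ∀ v ∈ e, v ∈ W} := by
    ext e
    induction e with | h a b =>
    simp only [Set.mem_ofPred_eq, mem_edgeSet, sup_adj, edge_adj, Sym2.mem_iff, forall_eq_or_imp,
      forall_eq]
    grind
  rw [pot, pot, hE]

lemma pot_nearSide_of_notMem_support (h : v ∉ G.support) : pot G (nearSide G σ v) = φ := by
  have : nearSide G σ v = {v} := by
    ext w
    simp +contextual [nearSide, reachable_iff_eq_of_notMem_support h, eq_comm]
  rw [this, pot_singleton]

lemma pot_farSide_of_notMem_support (h : v ∉ G.support) : pot G (farSide G σ v) = 0 := by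
  have : farSide G σ v = ∅ := by
    ext w
    simp +contextual [farSide, reachable_iff_eq_of_notMem_support h, eq_comm]
  rw [this, pot_empty]

lemma fComp_of_notMem_support (h : v ∉ G.support) : fComp G σ (G.connectedComponentMk v) = 0 :=
  if_pos (subsingleton_supp_connectedComponentMk_iff.2 h)

lemma fComp_of_mem_support (h : v ∈ G.support) : fComp G σ (G.connectedComponentMk v) =
    g (pot G (nearSide G σ v)) (pot G (farSide G σ v)) := by
  rw [fComp, if_neg (by rwa [subsingleton_supp_connectedComponentMk_iff, not_not])]
  have hside : ∀ t, {w ∈ (G.connectedComponentMk v).supp | σ w = t} =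
      {w | G.Reachable v w ∧ σ w = t} := fun t => by
    ext w
    simp [reachable_comm]
  rw [hside, hside, nearSide, farSide]
  cases σ v
  · rw [g_comm]
    simp
  · simp

lemma IsRedBipartition.fComp_eq (hσ : IsRedBipartition G c σ) (hτ : IsRedBipartition G c τ)
    (K : G.ConnectedComponent) : fComp G σ K = fComp G τ K := by
  induction K using ConnectedComponent.ind with | h v =>
  by_cases h : v ∈ G.support
  · rw [fComp_of_mem_support h, fComp_of_mem_support h, hσ.nearSide_eq hτ, hσ.farSide_eq hτ]
  · rw [fComp_of_notMem_support h, fComp_of_notMem_support h]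

lemma IsRedBipartition.potential_eq (hσ : IsRedBipartition G c σ) (hτ : IsRedBipartition G c τ) :
    potential G σ = potential G τ :=
  finsum_congr (hσ.fComp_eq hτ)

lemma nearSide_sup_edge_of_ne (h : σ u ≠ σ u') :
    nearSide (G ⊔ edge u u') σ u = nearSide G σ u ∪ farSide G σ u' := by
  ext w
  simp only [nearSide, farSide, Set.mem_ofPred_eq, Set.mem_union, reachable_sup_edge_left_iff]
  have hside : σ w = σ u ↔ σ w ≠ σ u' := by rw [Bool.eq_not.2 h, Bool.eq_not]
  tauto

lemma farSide_sup_edge_of_ne (h : σ u ≠ σ u') :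
    farSide (G ⊔ edge u u') σ u = farSide G σ u ∪ nearSide G σ u' := by
  ext w
  simp only [nearSide, farSide, Set.mem_ofPred_eq, Set.mem_union, reachable_sup_edge_left_iff]
  have hside : σ w = σ u ↔ σ w ≠ σ u' := by rw [Bool.eq_not.2 h, Bool.eq_not]
  tauto

lemma nearSide_sup_edge_of_eq (h : σ u = σ u') :
    nearSide (G ⊔ edge u u') σ u = nearSide G σ u ∪ nearSide G σ u' := by
  ext w
  simp only [nearSide, Set.mem_ofPred_eq, Set.mem_union, reachable_sup_edge_left_iff]
  grind

lemma farSide_sup_edge_of_eq (h : σ u = σ u') :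
    farSide (G ⊔ edge u u') σ u = farSide G σ u ∪ farSide G σ u' := by
  ext w
  simp only [farSide, Set.mem_ofPred_eq, Set.mem_union, reachable_sup_edge_left_iff]
  grind

lemma pot_union_of_not_reachable (hfin : G.edgeSet.Finite) (h : ¬ G.Reachable u u')
    {W₁ W₂ : Set ℕ} (hW₁ : W₁ ⊆ {w | G.Reachable u w}) (hW₂ : W₂ ⊆ {w | G.Reachable u' w}) :
    pot G (W₁ ∪ W₂) = pot G W₁ + pot G W₂ :=
  pot_union hfin ((finite_setOf_reachable hfin u).subset hW₁)
    ((finite_setOf_reachable hfin u').subset hW₂)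
    (Set.disjoint_left.2 fun _ h₁ h₂ => h ((hW₁ h₁).trans (hW₂ h₂).symm))
    fun _ hx _ hy hxy => h ((hW₁ hx).trans (hxy.reachable.trans (hW₂ hy).symm))

lemma mem_support_sup_edge (hne : u ≠ u') : u ∈ (G ⊔ edge u u').support :=
  ⟨u', .inr (by simp [edge_adj, hne])⟩

lemma fComp_sup_edge_of_ne (hfin : G.edgeSet.Finite) (h : ¬ G.Reachable u u') (hσ : σ u ≠ σ u') :
    fComp (G ⊔ edge u u') σ ((G ⊔ edge u u').connectedComponentMk u) =
      g (pot G (nearSide G σ u) + pot G (farSide G σ u'))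
        (pot G (farSide G σ u) + pot G (nearSide G σ u')) := by
  rw [fComp_of_mem_support (mem_support_sup_edge (ne_of_apply_ne σ hσ)),
    pot_sup_edge_of_notMem fun hu => hσ hu.2.2.symm, pot_sup_edge_of_notMem fun hu => hu.1.2 rfl,
    nearSide_sup_edge_of_ne hσ, farSide_sup_edge_of_ne hσ,
    pot_union_of_not_reachable hfin h nearSide_subset farSide_subset,
    pot_union_of_not_reachable hfin h farSide_subset nearSide_subset]

lemma fComp_sup_edge_of_eq (hfin : G.edgeSet.Finite) (h : ¬ G.Reachable u u') (hσ : σ u = σ u') :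
    fComp (G ⊔ edge u u') σ ((G ⊔ edge u u').connectedComponentMk u) =
      g (pot G (nearSide G σ u) + pot G (nearSide G σ u') + 1)
        (pot G (farSide G σ u) + pot G (farSide G σ u')) := by
  have hne : u ≠ u' := fun huu' => h (huu' ▸ .rfl)
  rw [fComp_of_mem_support (mem_support_sup_edge hne),
    pot_sup_edge_of_notMem (W := farSide (G ⊔ edge u u') σ u) fun hu => hu.1.2 rfl,
    nearSide_sup_edge_of_eq hσ, farSide_sup_edge_of_eq hσ,
    pot_sup_edge_of_mem hfin hne (fun hadj => h hadj.reachable) (.inl ⟨.rfl, rfl⟩)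
      (.inr ⟨.rfl, rfl⟩),
    pot_union_of_not_reachable hfin h nearSide_subset nearSide_subset,
    pot_union_of_not_reachable hfin h farSide_subset farSide_subset]

lemma fComp_sup_edge_le_of_reachable (hfin : G.edgeSet.Finite) (hne : u ≠ u')
    (hnadj : ¬ G.Adj u u') (h : G.Reachable u u') :
    fComp (G ⊔ edge u u') σ ((G ⊔ edge u u').connectedComponentMk u) ≤
      fComp G σ (G.connectedComponentMk u) + φ + 1 := by
  have hreach : ∀ w, (G ⊔ edge u u').Reachable u w ↔ G.Reachable u w := fun w => by
    rw [reachable_sup_edge_left_iff, or_iff_left_of_imp h.trans]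
  have hnear : nearSide (G ⊔ edge u u') σ u = nearSide G σ u := by simp only [nearSide, hreach]
  have hfar : farSide (G ⊔ edge u u') σ u = farSide G σ u := by simp only [farSide, hreach]
  rw [fComp_of_mem_support (mem_support_sup_edge hne), hnear, hfar,
    fComp_of_mem_support (mem_support_of_reachable hne h),
    pot_sup_edge_of_notMem (W := farSide G σ u) fun hu => hu.1.2 rfl]
  by_cases hσ : σ u' = σ u
  · rw [pot_sup_edge_of_mem (W := nearSide G σ u) hfin hne hnadj ⟨.rfl, rfl⟩ ⟨h, hσ⟩]
    exact g_add_one_left_le _ _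
  · rw [pot_sup_edge_of_notMem fun hu => hσ hu.2.2]
    linarith [one_lt_φ]

lemma g_sides_le_or (G : SimpleGraph ℕ) (σ : ℕ → Bool) (u u' : ℕ) :
    g (pot G (nearSide G σ u) + pot G (farSide G σ u'))
        (pot G (farSide G σ u) + pot G (nearSide G σ u')) ≤
      fComp G σ (G.connectedComponentMk u) + fComp G σ (G.connectedComponentMk u') + φ + 1 ∨
    g (pot G (nearSide G σ u) + pot G (nearSide G σ u') + 1)
        (pot G (farSide G σ u) + pot G (farSide G σ u')) ≤
      fComp G σ (G.connectedComponentMk u) + fComp G σ (G.connectedComponentMk u') + φ + 1 := by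
  by_cases hu : u ∈ G.support <;> by_cases hu' : u' ∈ G.support
  · simpa only [fComp_of_mem_support hu, fComp_of_mem_support hu'] using g_merge_le_or _ _ _ _
  · simpa only [fComp_of_mem_support hu, fComp_of_notMem_support hu',
      pot_nearSide_of_notMem_support hu', pot_farSide_of_notMem_support hu', add_zero]
      using g_add_φ_le_or (pot G (nearSide G σ u)) (pot G (farSide G σ u))
  · have hle := g_add_φ_le_or (pot G (nearSide G σ u')) (pot G (farSide G σ u'))
    rw [g_comm _ (_ + φ)] at hle
    simpa only [fComp_of_mem_support hu', fComp_of_notMem_support hu,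
      pot_nearSide_of_notMem_support hu, pot_farSide_of_notMem_support hu, zero_add,
      add_comm φ (pot G _)] using hle
  · left
    simpa only [fComp_of_notMem_support hu, fComp_of_notMem_support hu',
      pot_nearSide_of_notMem_support hu, pot_farSide_of_notMem_support hu,
      pot_nearSide_of_notMem_support hu', pot_farSide_of_notMem_support hu', add_zero, zero_add]
      using g_φ_φ_le

/-! ### The effect of a new edge on the potential -/

lemma finite_support_fComp (hfin : G.edgeSet.Finite) (σ : ℕ → Bool) :
    (Function.support (fComp G σ)).Finite := by
  refine ((finite_support_of_finite_edgeSet hfin).image G.connectedComponentMk).subset fun K => ?_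
  induction K using ConnectedComponent.ind with | h v =>
  intro hv
  exact ⟨v, by_contra fun h => hv (fComp_of_notMem_support h), rfl⟩

lemma potential_eq_add_finsum_compl (hfin : G.edgeSet.Finite) (σ : ℕ → Bool)
    (s : Set G.ConnectedComponent) :
    potential G σ = ∑ᶠ K ∈ s, fComp G σ K + ∑ᶠ K ∈ sᶜ, fComp G σ K := by
  rw [potential, ← finsum_mem_univ, Set.compl_eq_univ_sdiff,
    finsum_mem_add_sdiff' (Set.subset_univ s) ((finite_support_fComp hfin σ).inter_of_right _)]

lemma fComp_sup_edge_of_not_reachable (hu : ¬ G.Reachable v u) (hu' : ¬ G.Reachable v u') :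
    fComp (G ⊔ edge u u') σ ((G ⊔ edge u u').connectedComponentMk v) =
      fComp G σ (G.connectedComponentMk v) := by
  have hreach : ∀ w, (G ⊔ edge u u').Reachable v w ↔ G.Reachable v w := fun w => by
    simp [reachable_sup_edge_iff, hu, hu']
  have hsupp : ((G ⊔ edge u u').connectedComponentMk v).supp = (G.connectedComponentMk v).supp := by
    ext w
    rw [ConnectedComponent.mem_supp_iff, ConnectedComponent.mem_supp_iff, ConnectedComponent.eq,
      ConnectedComponent.eq, reachable_comm, hreach, reachable_comm]
  have hpot : ∀ t, pot (G ⊔ edge u u') {w ∈ (G.connectedComponentMk v).supp | σ w = t} =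
      pot G {w ∈ (G.connectedComponentMk v).supp | σ w = t} := fun t =>
    pot_sup_edge_of_notMem fun h => hu (ConnectedComponent.exact h.1.1).symm
  rw [fComp, hsupp, hpot, hpot, fComp]

lemma finsum_fComp_compl_sup_edge :
    ∑ᶠ K ∈ ({G.connectedComponentMk u, G.connectedComponentMk u'} : Set _)ᶜ, fComp G σ K =
      ∑ᶠ K ∈ ({(G ⊔ edge u u').connectedComponentMk u} : Set _)ᶜ, fComp (G ⊔ edge u u') σ K := by
  refine finsum_mem_eq_of_bijOn _ bijOn_map_connectedComponent_sup_edge fun K => ?_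
  induction K using ConnectedComponent.ind with | h v =>
  intro hv
  exact (fComp_sup_edge_of_not_reachable (fun h => hv (.inl (ConnectedComponent.sound h)))
    fun h => hv (.inr (ConnectedComponent.sound h))).symm

lemma potential_sup_edge_le {r : ℝ} (hfin : G.edgeSet.Finite)
    (h : fComp (G ⊔ edge u u') σ ((G ⊔ edge u u').connectedComponentMk u) ≤
      ∑ᶠ K ∈ ({G.connectedComponentMk u, G.connectedComponentMk u'} : Set _), fComp G σ K + r) :
    potential (G ⊔ edge u u') σ ≤ potential G σ + r := by
  have hfin' : (G ⊔ edge u u').edgeSet.Finite := by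
    rw [edgeSet_sup]
    exact hfin.union ((Set.finite_singleton _).subset edgeSet_edge_subset)
  rw [potential_eq_add_finsum_compl hfin' σ {(G ⊔ edge u u').connectedComponentMk u},
    finsum_mem_singleton, ← finsum_fComp_compl_sup_edge,
    potential_eq_add_finsum_compl hfin σ {G.connectedComponentMk u, G.connectedComponentMk u'}]
  linarith

lemma potential_sup_edge_le_of_reachable (hfin : G.edgeSet.Finite) (hne : u ≠ u')
    (hnadj : ¬ G.Adj u u') (h : G.Reachable u u') :
    potential (G ⊔ edge u u') σ ≤ potential G σ + φ + 1 := by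
  rw [add_assoc]
  refine potential_sup_edge_le hfin ?_
  rw [← ConnectedComponent.sound h, Set.pair_eq_singleton, finsum_mem_singleton, ← add_assoc]
  exact fComp_sup_edge_le_of_reachable hfin hne hnadj h

lemma potential_sup_edge_le_of_not_reachable (hfin : G.edgeSet.Finite) (h : ¬ G.Reachable u u')
    (hle : fComp (G ⊔ edge u u') σ ((G ⊔ edge u u').connectedComponentMk u) ≤
      fComp G σ (G.connectedComponentMk u) + fComp G σ (G.connectedComponentMk u') + φ + 1) :
    potential (G ⊔ edge u u') σ ≤ potential G σ + φ + 1 := by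
  rw [add_assoc]
  refine potential_sup_edge_le hfin ?_
  rwa [finsum_mem_pair fun huu' => h (ConnectedComponent.exact huu'), ← add_assoc]

lemma IsRedBipartition.exists_potential_sup_edge_le (hσ : IsRedBipartition G c σ)
    (hfin : G.edgeSet.Finite) (h : ¬ G.Reachable u u') :
    ∃ τ, IsRedBipartition G c τ ∧ potential (G ⊔ edge u u') τ ≤ potential G σ + φ + 1 := by
  rcases g_sides_le_or G σ u u' with hred | hblue
  · obtain ⟨τ, hτ, huu'⟩ := hσ.exists_bne_eq h true
    refine ⟨τ, hτ, ?_⟩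
    rw [hσ.potential_eq hτ]
    refine potential_sup_edge_le_of_not_reachable hfin h ?_
    rw [fComp_sup_edge_of_ne hfin h (by simpa using huu')]
    simpa only [hσ.nearSide_eq hτ, hσ.farSide_eq hτ, hσ.fComp_eq hτ] using hred
  · obtain ⟨τ, hτ, huu'⟩ := hσ.exists_bne_eq h false
    refine ⟨τ, hτ, ?_⟩
    rw [hσ.potential_eq hτ]
    refine potential_sup_edge_le_of_not_reachable hfin h ?_
    rw [fComp_sup_edge_of_eq hfin h (by simpa using huu')]
    simpa only [hσ.nearSide_eq hτ, hσ.farSide_eq hτ, hσ.fComp_eq hτ] using hblue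

end Sides

/-- Let `G` be a red-bipartite coloured graph on `ℕ` with finitely
many edges and let `e = uu'` be a non-edge of `G` with `u ≠ u'`. Then `e` can be
coloured red or blue so that the resulting coloured graph `G'` is red-bipartite and
`f(G') ≤ f(G) + φ + 1`. -/
theorem potential_step (G : SimpleGraph ℕ) (hfin : G.edgeSet.Finite)
    (c : Sym2 ℕ → Bool) (u u' : ℕ) (hne : u ≠ u') (hnadj : ¬ G.Adj u u')
    (σ : ℕ → Bool) (hσ : IsRedBipartition G c σ) :
    ∃ (b : Bool) (σ' : ℕ → Bool),
      IsRedBipartition (G ⊔ fromEdgeSet {s(u, u')})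
        (fun x => if x = s(u, u') then b else c x) σ' ∧
      potential (G ⊔ fromEdgeSet {s(u, u')}) σ' ≤ potential G σ + φ + 1 := by
  by_cases h : G.Reachable u u'
  · exact ⟨_, σ, hσ.sup_edge hnadj, potential_sup_edge_le_of_reachable hfin hne hnadj h⟩
  · obtain ⟨τ, hτ, hle⟩ := hσ.exists_potential_sup_edge_le hfin h
    exact ⟨_, τ, hτ.sup_edge hnadj, hle⟩
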